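/- For every subset P ⊆ [0,1] and every HyperLTL_prop formula ψ, there exists a HyperLTL formula Bool(ψ,P) (i.e. a HyperLTL_prop formula using only the interpreted Boolean functions max, min and x ↦ 1−x) with the same free variables, such that for every nonempty set T of Boolean traces and every trace assignment Π into Boolean traces: ⟦ψ⟧_Π^T ∈ P if and only if ⟦Bool(ψ,P)⟧_Π^T = 1. -/

import Mathlib

open Set

noncomputable section

/-- A (weighted) trace assigns to each time step and atomic proposition a weight in `[0,1]`. -/
abbrev Trace (AP : Type) : Type := ℕ → AP → unitInterval

/-- Boolean traces: all weights are `0` or `1`. -/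
def IsBoolTrace {AP : Type} (t : Trace AP) : Prop :=
  ∀ i p, (t i p : ℝ) = 0 ∨ (t i p : ℝ) = 1

/-- The traces whose weights all belong to `W` (the set `𝕋_W`). -/
def TracesW {AP : Type} (W : Set ℝ) : Set (Trace AP) :=
  {t | ∀ i p, (t i p : ℝ) ∈ W}

/-- Shifting a trace assignment: `Π[i,∞]`. -/
def shiftA {AP Var : Type} (ρ : Var → Trace AP) (i : ℕ) : Var → Trace AP :=
  fun π n => ρ π (n + i)

/-- `prefMin g i = min_{0 ≤ j < i} g j` (with the empty minimum being `1`). -/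
def prefMin (g : ℕ → ℝ) : ℕ → ℝ
  | 0 => 1
  | n + 1 => min (prefMin g n) (g n)

/-- A signature of function symbols, each interpreted as a map `[0,1]^k → [0,1]`. -/
structure PropSig where
  Fn : Type
  arity : Fn → ℕ
  interp : (f : Fn) → (Fin (arity f) → ℝ) → ℝ
  interp_mem : ∀ (f : Fn) (x : Fin (arity f) → ℝ),
      (∀ i, x i ∈ Set.Icc (0:ℝ) 1) → interp f x ∈ Set.Icc (0:ℝ) 1

/-- Quantifier-free HyperLTL_prop formulas. -/
inductive PropQF (AP Var : Type) (S : PropSig) : Type where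
  | tt : PropQF AP Var S
  | ff : PropQF AP Var S
  | atom : AP → Var → PropQF AP Var S
  | app : (f : S.Fn) → (Fin (S.arity f) → PropQF AP Var S) → PropQF AP Var S
  | next : PropQF AP Var S → PropQF AP Var S
  | untl : PropQF AP Var S → PropQF AP Var S → PropQF AP Var S

/-- HyperLTL_prop formulas: a prefix of quantifiers over a quantifier-free formula. -/
inductive PropForm (AP Var : Type) (S : PropSig) : Type where
  | qf : PropQF AP Var S → PropForm AP Var S
  | ex : Var → PropForm AP Var S → PropForm AP Var S
  | all : Var → PropForm AP Var S → PropForm AP Var S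

variable {AP Var : Type} {S : PropSig}

/-- Satisfaction value of quantifier-free formulas. -/
def semQF : PropQF AP Var S → (Var → Trace AP) → Set (Trace AP) → ℝ
  | .tt, _, _ => 1
  | .ff, _, _ => 0
  | .atom p π, ρ, _ => (ρ π 0 p : ℝ)
  | .app f args, ρ, T => S.interp f fun i => semQF (args i) ρ T
  | .next φ, ρ, T => semQF φ (shiftA ρ 1) T
  | .untl φ₁ φ₂, ρ, T =>
      ⨆ i : ℕ, min (semQF φ₂ (shiftA ρ i) T)
        (prefMin (fun j => semQF φ₁ (shiftA ρ j) T) i)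

/-- Satisfaction value `⟦ψ⟧_Π^T` of HyperLTL_prop formulas. -/
def sem [DecidableEq Var] :
    PropForm AP Var S → (Var → Trace AP) → Set (Trace AP) → ℝ
  | .qf φ, ρ, T => semQF φ ρ T
  | .ex π ψ, ρ, T => sSup ((fun t => sem ψ (Function.update ρ π t) T) '' T)
  | .all π ψ, ρ, T => sInf ((fun t => sem ψ (Function.update ρ π t) T) '' T)

/-- The Boolean function symbols: `max`, `min`, and `x ↦ 1 - x`. -/
inductive BoolFn : Type where
  | neg : BoolFn
  | bmax : BoolFn
  | bmin : BoolFn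

def barity : BoolFn → ℕ
  | .neg => 1
  | .bmax => 2
  | .bmin => 2

def binterp : (f : BoolFn) → (Fin (barity f) → ℝ) → ℝ
  | .neg, x => 1 - x ⟨0, by simp [barity]⟩
  | .bmax, x => max (x ⟨0, by simp [barity]⟩) (x ⟨1, by simp [barity]⟩)
  | .bmin, x => min (x ⟨0, by simp [barity]⟩) (x ⟨1, by simp [barity]⟩)

/-- The signature of HyperLTL formulas: only `max`, `min` and `x ↦ 1 - x`. -/
def boolSig : PropSig where
  Fn := BoolFn
  arity := barity
  interp := binterp
  interp_mem := by
    intro f x hx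
    cases f with
    | neg =>
        have h0 := hx ⟨0, by simp [barity]⟩
        simp only [binterp, Set.mem_Icc] at *
        constructor <;> linarith [h0.1, h0.2]
    | bmax =>
        have h0 := hx ⟨0, by simp [barity]⟩
        have h1 := hx ⟨1, by simp [barity]⟩
        simp only [binterp, Set.mem_Icc] at *
        exact ⟨le_max_of_le_left h0.1, max_le h0.2 h1.2⟩
    | bmin =>
        have h0 := hx ⟨0, by simp [barity]⟩
        have h1 := hx ⟨1, by simp [barity]⟩
        simp only [binterp, Set.mem_Icc] at *
        exact ⟨le_min h0.1 h1.1, min_le_of_left_le h0.2⟩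

/-- The variables occurring in a quantifier-free formula. -/
def varsQF {AP Var : Type} {S : PropSig} : PropQF AP Var S → Set Var
  | .tt => ∅
  | .ff => ∅
  | .atom _ π => {π}
  | .app _ args => ⋃ i, varsQF (args i)
  | .next φ => varsQF φ
  | .untl φ₁ φ₂ => varsQF φ₁ ∪ varsQF φ₂

/-- The free variables of a formula. -/
def freeVars {AP Var : Type} {S : PropSig} : PropForm AP Var S → Set Var
  | .qf φ => varsQF φ
  | .ex π ψ => freeVars ψ \ {π}
  | .all π ψ => freeVars ψ \ {π}

/-- A nonempty set of Boolean traces together with an assignment of Boolean traces. -/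
structure BoolCtx (AP Var : Type) where
  assign : Var → Trace AP
  traces : Set (Trace AP)
  isBool_assign : ∀ π, IsBoolTrace (assign π)
  isBool_traces : ∀ t ∈ traces, IsBoolTrace t
  nonempty : traces.Nonempty

namespace BoolCtx

/-- The context with the assignment shifted by `i` steps. -/
def shift (x : BoolCtx AP Var) (i : ℕ) : BoolCtx AP Var :=
  ⟨shiftA x.assign i, x.traces, fun π n p => x.isBool_assign π (n + i) p,
    x.isBool_traces, x.nonempty⟩

/-- The context with `π` reassigned to a trace of the trace set. -/
def update [DecidableEq Var] (x : BoolCtx AP Var) (π : Var) (t : x.traces) : BoolCtx AP Var :=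
  ⟨Function.update x.assign π t, x.traces, fun q => by
    by_cases h : q = π
    · subst h; simpa using x.isBool_traces t t.2
    · simpa [h] using x.isBool_assign q, x.isBool_traces, x.nonempty⟩

/-- The context with the assignment precomposed with a permutation of the variables. -/
def comp (x : BoolCtx AP Var) (σ : Equiv.Perm Var) : BoolCtx AP Var :=
  ⟨x.assign ∘ σ, x.traces, fun π => x.isBool_assign (σ π), x.isBool_traces, x.nonempty⟩

end BoolCtx

/-- The sets of Boolean contexts definable by quantifier-free HyperLTL formulas, together with
the set of variables of the formula. -/
inductive QFDef : Set Var → Set (BoolCtx AP Var) → Prop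
  | univ : QFDef ∅ Set.univ
  | atom (p : AP) (π : Var) : QFDef {π} {x | (x.assign π 0 p : ℝ) = 1}
  | compl {F A} : QFDef F A → QFDef F Aᶜ
  | inter {F G A B} : QFDef F A → QFDef G B → QFDef (F ∪ G) (A ∩ B)
  | next {F A} : QFDef F A → QFDef F {x | x.shift 1 ∈ A}
  | untl {F G A B} : QFDef F A → QFDef G B →
      QFDef (F ∪ G) {x | ∃ i, x.shift i ∈ B ∧ ∀ j < i, x.shift j ∈ A}

/-- The sets of Boolean contexts definable by HyperLTL formulas, together with the set of free
variables of the formula. -/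
inductive Def [DecidableEq Var] : Set Var → Set (BoolCtx AP Var) → Prop
  | qf {F A} : QFDef F A → Def F A
  | ex {F A} (π : Var) : Def F A → Def (F \ {π}) {x | ∃ t, x.update π t ∈ A}
  | all {F A} (π : Var) : Def F A → Def (F \ {π}) {x | ∀ t, x.update π t ∈ A}

section Until

theorem le_prefMin_iff {g : ℕ → ℝ} {v : ℝ} (hv : v ≤ 1) (i : ℕ) :
    v ≤ prefMin g i ↔ ∀ j < i, v ≤ g j := by
  induction i with
  | zero => simpa [prefMin]
  | succ n ih => simp only [prefMin, le_min_iff, ih, Nat.forall_lt_succ_right]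

theorem prefMin_mem {V : Set ℝ} (h1 : 1 ∈ V) {g : ℕ → ℝ} (hg : ∀ i, g i ∈ V) (i : ℕ) :
    prefMin g i ∈ V := by
  induction i with
  | zero => exact h1
  | succ n ih => exact min_rec' (· ∈ V) ih (hg n)

variable {V : Set ℝ} {g₁ g₂ : ℕ → ℝ}

theorem iSup_min_prefMin_mem_range (hV : V.Finite) (h1 : 1 ∈ V) (hg₁ : ∀ i, g₁ i ∈ V)
    (hg₂ : ∀ i, g₂ i ∈ V) :
    (range fun i => min (g₂ i) (prefMin g₁ i)).Finite ∧
      range (fun i => min (g₂ i) (prefMin g₁ i)) ⊆ V := by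
  have h : range (fun i => min (g₂ i) (prefMin g₁ i)) ⊆ V := by
    rintro _ ⟨i, rfl⟩
    exact min_rec' (· ∈ V) (hg₂ i) (prefMin_mem h1 hg₁ i)
  exact ⟨hV.subset h, h⟩

theorem iSup_min_prefMin_mem (hV : V.Finite) (h1 : 1 ∈ V) (hg₁ : ∀ i, g₁ i ∈ V)
    (hg₂ : ∀ i, g₂ i ∈ V) : (⨆ i, min (g₂ i) (prefMin g₁ i)) ∈ V := by
  obtain ⟨hfin, hsub⟩ := iSup_min_prefMin_mem_range hV h1 hg₁ hg₂
  exact hsub ((range_nonempty _).csSup_mem hfin)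

theorem le_iSup_min_prefMin_iff (hV : V.Finite) (h1 : 1 ∈ V) (hg₁ : ∀ i, g₁ i ∈ V)
    (hg₂ : ∀ i, g₂ i ∈ V) {v : ℝ} (hv : v ≤ 1) :
    v ≤ (⨆ i, min (g₂ i) (prefMin g₁ i)) ↔ ∃ i, v ≤ g₂ i ∧ ∀ j < i, v ≤ g₁ j := by
  obtain ⟨hfin, -⟩ := iSup_min_prefMin_mem_range hV h1 hg₁ hg₂
  simp only [← le_prefMin_iff hv, ← le_min_iff]
  constructor
  · intro h
    obtain ⟨i, hi⟩ := (range_nonempty fun i => min (g₂ i) (prefMin g₁ i)).csSup_mem hfin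
    exact ⟨i, h.trans hi.ge⟩
  · rintro ⟨i, hi⟩
    exact hi.trans (le_ciSup hfin.bddAbove i)

end Until

section Thresholds

variable {X : Type} {K : Set (Set X)}

theorem biUnion_mem_of_finite {ι : Type} (hne : K.Nonempty)
    (hinter : ∀ A ∈ K, ∀ B ∈ K, A ∩ B ∈ K) (hcompl : ∀ A ∈ K, Aᶜ ∈ K) {s : Set ι}
    (hs : s.Finite) {A : ι → Set X} (hA : ∀ i ∈ s, A i ∈ K) : (⋃ i ∈ s, A i) ∈ K := by
  induction s, hs using Set.Finite.induction_on with
  | empty =>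
    obtain ⟨B, hB⟩ := hne
    simpa using hinter B hB _ (hcompl B hB)
  | insert _ _ ih =>
    rw [biUnion_insert, union_eq_compl_compl_inter_compl]
    exact hcompl _ (hinter _ (hcompl _ (hA _ (mem_insert _ _))) _
      (hcompl _ (ih fun i hi => hA i (mem_insert_of_mem _ hi))))

/-- A family closed under Boolean operations that contains the superlevel sets of a function with
finitely many values contains all preimages under that function. -/
theorem preimage_mem_of_superlevel_mem (hne : K.Nonempty)
    (hinter : ∀ A ∈ K, ∀ B ∈ K, A ∩ B ∈ K) (hcompl : ∀ A ∈ K, Aᶜ ∈ K) {V : Set ℝ}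
    (hV : V.Finite) {g : X → ℝ} (hg : ∀ x, g x ∈ V) (hK : ∀ v ∈ V, {x | v ≤ g x} ∈ K)
    (P : Set ℝ) : {x | g x ∈ P} ∈ K := by
  have key : {x | g x ∈ P} =
      ⋃ v ∈ V ∩ P, {x | v ≤ g x} ∩ (⋃ w ∈ V ∩ Ioi v, {x | w ≤ g x})ᶜ := by
    ext x
    simp only [mem_ofPred_eq, mem_iUnion, mem_inter_iff, mem_compl_iff, exists_prop, mem_Ioi,
      not_exists, not_and, not_le]
    constructor
    · exact fun h => ⟨g x, ⟨hg x, h⟩, le_rfl, fun w hw => hw.2⟩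
    · rintro ⟨v, ⟨-, hvP⟩, hle, hlt⟩
      rcases hle.eq_or_lt with h | h
      · exact h ▸ hvP
      · exact absurd (hlt _ ⟨hg x, h⟩) (lt_irrefl _)
  rw [key]
  refine biUnion_mem_of_finite hne hinter hcompl (hV.inter_of_left P) fun v hv =>
    hinter _ (hK v hv.1) _ (hcompl _ ?_)
  exact biUnion_mem_of_finite hne hinter hcompl (hV.inter_of_left _) fun w hw => hK w hw.1

end Thresholds

section Indicator

variable {X : Type}

theorem indicator_one_mem (C : Set X) (y : X) :
    C.indicator (1 : X → ℝ) y ∈ ({0, 1} : Set ℝ) := by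
  by_cases hy : y ∈ C <;> simp [hy]

theorem one_le_indicator_one_iff (C : Set X) (y : X) :
    1 ≤ C.indicator (1 : X → ℝ) y ↔ y ∈ C := by
  by_cases hy : y ∈ C <;> simp [hy]

theorem eq_indicator_one {C : Set X} {y : X} {r : ℝ} (hr : r ∈ ({0, 1} : Set ℝ))
    (h : 1 ≤ r ↔ y ∈ C) : r = C.indicator 1 y := by
  rcases hr with rfl | rfl
  · have : y ∉ C := fun hy => absurd (h.2 hy) (by norm_num)
    simp [this]
  · simp [h.1 le_rfl]

end Indicator

namespace QFDef

variable {F G : Set Var} {A B : Set (BoolCtx AP Var)}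

theorem congr (h : QFDef F A) (hAB : ∀ x, x ∈ A ↔ x ∈ B) : QFDef F B :=
  Set.ext hAB ▸ h

theorem finite (h : QFDef F A) : F.Finite := by
  induction h with
  | univ => exact finite_empty
  | atom p π => exact finite_singleton π
  | compl _ ih => exact ih
  | inter _ _ ih₁ ih₂ => exact ih₁.union ih₂
  | next _ ih => exact ih
  | untl _ _ ih₁ ih₂ => exact ih₁.union ih₂

theorem mem_congr (h : QFDef F A) {x y : BoolCtx AP Var}
    (hxy : ∀ π ∈ F, x.assign π = y.assign π) : x ∈ A ↔ y ∈ A := by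
  have hshift : ∀ {F : Set Var} {x y : BoolCtx AP Var},
      (∀ π ∈ F, x.assign π = y.assign π) → ∀ i,
      ∀ π ∈ F, (x.shift i).assign π = (y.shift i).assign π := by
    intro F x y hxy i π hπ
    funext n
    exact congrFun (hxy π hπ) (n + i)
  induction h generalizing x y with
  | univ => simp
  | atom p π => simp [hxy π rfl]
  | compl _ ih => simp [ih hxy]
  | inter _ _ ih₁ ih₂ =>
    simp [ih₁ fun π hπ => hxy π (.inl hπ), ih₂ fun π hπ => hxy π (.inr hπ)]
  | next _ ih => exact ih (hshift hxy 1)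
  | untl _ _ ih₁ ih₂ =>
    simp only [mem_ofPred_eq, ih₁ (hshift (fun π hπ => hxy π (.inl hπ)) _),
      ih₂ (hshift (fun π hπ => hxy π (.inr hπ)) _)]

theorem image_perm (h : QFDef F A) (σ : Equiv.Perm Var) :
    QFDef (σ '' F) {x | x.comp σ ∈ A} := by
  induction h with
  | univ => simpa using QFDef.univ
  | atom p π => rw [image_singleton]; exact QFDef.atom p (σ π)
  | compl _ ih => exact ih.compl
  | inter _ _ ih₁ ih₂ => rw [image_union]; exact ih₁.inter ih₂
  | next _ ih => exact ih.next
  | untl _ _ ih₁ ih₂ => rw [image_union]; exact ih₁.untl ih₂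

theorem inter_self_vars (hA : QFDef F A) (hB : QFDef F B) : QFDef F (A ∩ B) := by
  simpa using hA.inter hB

theorem iInter {n : ℕ} {F : Fin n → Set Var} {A : Fin n → Set (BoolCtx AP Var)}
    (h : ∀ i, QFDef (F i) (A i)) : QFDef (⋃ i, F i) (⋂ i, A i) := by
  induction n with
  | zero => simpa using QFDef.univ
  | succ n ih =>
    have := (h 0).inter (ih fun i => h i.succ)
    convert this using 1
    · ext; simp [Fin.exists_fin_succ]
    · ext; simp [Fin.forall_fin_succ]

theorem preimage {V : Set ℝ} (hV : V.Finite) {g : BoolCtx AP Var → ℝ} (hg : ∀ x, g x ∈ V)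
    (hA : QFDef F A) (h : ∀ v ∈ V, QFDef F {x | v ≤ g x}) (P : Set ℝ) :
    QFDef F {x | g x ∈ P} :=
  preimage_mem_of_superlevel_mem (K := {B | QFDef F B}) ⟨A, hA⟩
    (fun _ h₁ _ h₂ => h₁.inter_self_vars h₂) (fun _ h => h.compl) hV hg h P

/-- Every definable set is the set of contexts satisfying some quantifier-free HyperLTL formula. -/
theorem exists_formula (h : QFDef F A) : ∃ χ : PropQF AP Var boolSig, varsQF χ = F ∧
    ∀ x, semQF χ x.assign x.traces = A.indicator 1 x := by
  induction h with
  | univ => exact ⟨.tt, rfl, fun x => by simp [semQF]⟩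
  | atom p π =>
    refine ⟨.atom p π, rfl, fun x => ?_⟩
    exact eq_indicator_one (x.isBool_assign π 0 p) (x.assign π 0 p).2.2.ge_iff_eq
  | @compl F A _ ih =>
    obtain ⟨χ, rfl, hχ⟩ := ih
    refine ⟨.app (S := boolSig) BoolFn.neg fun _ => χ, ?_, fun x => ?_⟩
    · exact iUnion_const (ι := Fin 1) _
    · change 1 - semQF χ x.assign x.traces = _
      rw [hχ]
      by_cases hx : x ∈ A <;> simp [hx]
  | @inter F G A B _ _ ih₁ ih₂ =>
    obtain ⟨χ₁, rfl, hχ₁⟩ := ih₁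
    obtain ⟨χ₂, rfl, hχ₂⟩ := ih₂
    refine ⟨.app (S := boolSig) BoolFn.bmin fun i : Fin 2 => if i = 0 then χ₁ else χ₂,
      ?_, fun x => ?_⟩
    · ext q
      simp only [varsQF, mem_iUnion]
      exact (Fin.exists_fin_two (p := fun i => q ∈ varsQF (if i = 0 then χ₁ else χ₂)))
    · change min (semQF χ₁ x.assign x.traces) (semQF χ₂ x.assign x.traces) = _
      rw [hχ₁, hχ₂]
      by_cases hA : x ∈ A <;> by_cases hB : x ∈ B <;> simp [hA, hB]
  | next _ ih =>
    obtain ⟨χ, rfl, hχ⟩ := ih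
    exact ⟨.next χ, rfl, fun x => hχ (x.shift 1)⟩
  | @untl F G A B _ _ ih₁ ih₂ =>
    obtain ⟨χ₁, rfl, hχ₁⟩ := ih₁
    obtain ⟨χ₂, rfl, hχ₂⟩ := ih₂
    refine ⟨.untl χ₁ χ₂, rfl, fun x => ?_⟩
    have hsem : semQF (.untl χ₁ χ₂) x.assign x.traces =
        ⨆ i, min (B.indicator (1 : BoolCtx AP Var → ℝ) (x.shift i))
          (prefMin (fun j => A.indicator (1 : BoolCtx AP Var → ℝ) (x.shift j)) i) := by
      simp only [← hχ₁, ← hχ₂]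
      rfl
    have hV : ({0, 1} : Set ℝ).Finite := by simp
    have hval := iSup_min_prefMin_mem hV (by simp) (fun i => indicator_one_mem A (x.shift i))
      (fun i => indicator_one_mem B (x.shift i))
    have hle := le_iSup_min_prefMin_iff hV (by simp) (fun i => indicator_one_mem A (x.shift i))
      (fun i => indicator_one_mem B (x.shift i)) le_rfl
    simp only [one_le_indicator_one_iff] at hle
    rw [← hsem] at hval hle
    exact eq_indicator_one hval hle

end QFDef

namespace Def

variable [DecidableEq Var] {F G : Set Var} {A B : Set (BoolCtx AP Var)}

theorem congr (h : Def F A) (hAB : ∀ x, x ∈ A ↔ x ∈ B) : Def F B :=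
  Set.ext hAB ▸ h

theorem finite (h : Def F A) : F.Finite := by
  induction h with
  | qf h => exact h.finite
  | ex π _ ih => exact ih.sdiff
  | all π _ ih => exact ih.sdiff

theorem mem_congr (h : Def F A) {x y : BoolCtx AP Var} (ht : x.traces = y.traces)
    (hxy : ∀ π ∈ F, x.assign π = y.assign π) : x ∈ A ↔ y ∈ A := by
  have hupd : ∀ {F : Set Var} {π : Var} {x y : BoolCtx AP Var},
      (∀ q ∈ F \ {π}, x.assign q = y.assign q) →
      ∀ (t : x.traces) (t' : y.traces), (t : Trace AP) = t' →
      ∀ q ∈ F, (x.update π t).assign q = (y.update π t').assign q := by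
    intro F π x y hxy t t' htt q hq
    by_cases h : q = π
    · subst h; simp [BoolCtx.update, htt]
    · simp [BoolCtx.update, h, hxy q ⟨hq, h⟩]
  induction h generalizing x y with
  | qf h => exact h.mem_congr hxy
  | ex π _ ih =>
    refine (Equiv.setCongr ht).exists_congr fun t => ?_
    exact ih ht (hupd hxy t _ rfl)
  | all π _ ih =>
    refine (Equiv.setCongr ht).forall_congr fun t => ?_
    exact ih ht (hupd hxy t _ rfl)

theorem compl (h : Def F A) : Def F Aᶜ := by
  induction h with
  | qf h => exact .qf h.compl
  | ex π _ ih => convert ih.all π using 1; ext; simp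
  | all π _ ih => convert ih.ex π using 1; ext; simp

/-- Renaming a quantified variable to a fresh one `π'`. -/
theorem mem_update_comp_iff (h : Def F A) (σ : Equiv.Perm Var) {π π' : Var}
    (hF : π' ∉ σ '' F) (x : BoolCtx AP Var) (t : x.traces) :
    (x.update π' t).comp (σ.trans (Equiv.swap (σ π) π')) ∈ A ↔ (x.comp σ).update π t ∈ A := by
  refine h.mem_congr rfl fun q hq => ?_
  by_cases hqπ : q = π
  · subst hqπ; simp [BoolCtx.update, BoolCtx.comp]
  · have h' : σ q ≠ π' := fun e => hF ⟨q, hq, e⟩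
    have hne : σ q ≠ σ π := fun e => hqπ (σ.injective e)
    simp [BoolCtx.update, BoolCtx.comp, hqπ, Equiv.swap_apply_of_ne_of_ne hne h', h']

theorem image_union_diff_singleton (σ : Equiv.Perm Var) {π π' : Var}
    (hF : π' ∉ σ '' F) (hG : π' ∉ G) :
    ((σ.trans (Equiv.swap (σ π) π')) '' F ∪ G) \ {π'} = σ '' (F \ {π}) ∪ G := by
  have key : ∀ q ∈ F, q ≠ π → Equiv.swap (σ π) π' (σ q) = σ q := fun q hq hqπ =>
    Equiv.swap_apply_of_ne_of_ne (fun e => hqπ (σ.injective e)) fun e => hF ⟨q, hq, e⟩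
  ext r
  constructor
  · rintro ⟨⟨q, hq, rfl⟩ | hr, hr'⟩
    · have hqπ : q ≠ π := by rintro rfl; simp at hr'
      exact .inl ⟨q, ⟨hq, hqπ⟩, (key q hq hqπ).symm⟩
    · exact .inr hr
  · rintro (⟨q, ⟨hq, hqπ⟩, rfl⟩ | hr)
    · exact ⟨.inl ⟨q, hq, key q hq hqπ⟩, fun e => hF ⟨q, hq, e⟩⟩
    · exact ⟨.inr hr, fun e => hG (e ▸ hr)⟩

theorem mem_update_iff (h : Def G B) {π' : Var} (hG : π' ∉ G) (x : BoolCtx AP Var)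
    (t : x.traces) : x.update π' t ∈ B ↔ x ∈ B := by
  refine h.mem_congr rfl fun q hq => ?_
  have : q ≠ π' := fun e => hG (e ▸ hq)
  simp [BoolCtx.update, this]

/-- Pulling the quantifiers of one conjunct to the front. -/
theorem inter_of_forall_qf [Infinite Var] (hB : Def G B)
    (hqf : ∀ {F A}, QFDef F A → Def (F ∪ G) (A ∩ B)) (hA : Def F A) (σ : Equiv.Perm Var) :
    Def (σ '' F ∪ G) ({x | x.comp σ ∈ A} ∩ B) := by
  induction hA generalizing σ with
  | qf h => exact hqf (h.image_perm σ)
  | @ex F A π hA ih =>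
    obtain ⟨π', hπ'⟩ := ((hA.finite.image σ).union hB.finite).exists_notMem
    rw [mem_union, not_or] at hπ'
    rw [← image_union_diff_singleton σ hπ'.1 hπ'.2]
    convert (ih (σ.trans (Equiv.swap (σ π) π'))).ex π' using 1
    ext x
    simp only [mem_inter_iff, mem_ofPred_eq, hA.mem_update_comp_iff σ hπ'.1,
      hB.mem_update_iff hπ'.2, exists_and_right]
    rfl
  | @all F A π hA ih =>
    obtain ⟨π', hπ'⟩ := ((hA.finite.image σ).union hB.finite).exists_notMem
    rw [mem_union, not_or] at hπ'
    rw [← image_union_diff_singleton σ hπ'.1 hπ'.2]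
    convert (ih (σ.trans (Equiv.swap (σ π) π'))).all π' using 1
    ext x
    have : Nonempty x.traces := x.nonempty.to_subtype
    simp only [mem_inter_iff, mem_ofPred_eq, hA.mem_update_comp_iff σ hπ'.1,
      hB.mem_update_iff hπ'.2, forall_and, forall_const]
    rfl

theorem inter [Infinite Var] (hA : Def F A) (hB : Def G B) : Def (F ∪ G) (A ∩ B) := by
  have hqf : ∀ {F A}, QFDef F A → Def (F ∪ G) (A ∩ B) := by
    intro F A hA
    have := inter_of_forall_qf (.qf hA) (fun h => .qf (h.inter hA)) hB (Equiv.refl _)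
    rw [union_comm, inter_comm]
    rwa [Equiv.coe_refl, image_id] at this
  have := inter_of_forall_qf hB hqf hA (Equiv.refl _)
  rwa [Equiv.coe_refl, image_id] at this

theorem preimage [Infinite Var] {V : Set ℝ} (hV : V.Finite) {g : BoolCtx AP Var → ℝ}
    (hg : ∀ x, g x ∈ V) (hA : Def F A) (h : ∀ v ∈ V, Def F {x | v ≤ g x}) (P : Set ℝ) :
    Def F {x | g x ∈ P} :=
  preimage_mem_of_superlevel_mem (K := {B | Def F B}) ⟨A, hA⟩
    (fun _ h₁ _ h₂ => by simpa using h₁.inter h₂) (fun _ h => h.compl) hV hg h P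

end Def

section Quantifiers

variable {V : Set ℝ} {T : Set (Trace AP)} {g : Trace AP → ℝ}

theorem sSup_image_mem (hT : T.Nonempty) (hV : V.Finite) (hg : ∀ t ∈ T, g t ∈ V) :
    sSup (g '' T) ∈ V :=
  image_subset_iff.2 hg ((hT.image g).csSup_mem (hV.subset (image_subset_iff.2 hg)))

theorem sInf_image_mem (hT : T.Nonempty) (hV : V.Finite) (hg : ∀ t ∈ T, g t ∈ V) :
    sInf (g '' T) ∈ V :=
  image_subset_iff.2 hg ((hT.image g).csInf_mem (hV.subset (image_subset_iff.2 hg)))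

theorem le_sSup_image_iff (hT : T.Nonempty) (hV : V.Finite) (hg : ∀ t ∈ T, g t ∈ V) {v : ℝ} :
    v ≤ sSup (g '' T) ↔ ∃ t : T, v ≤ g t := by
  have hfin : (g '' T).Finite := hV.subset (image_subset_iff.2 hg)
  constructor
  · intro h
    obtain ⟨t, ht, he⟩ := (hT.image g).csSup_mem hfin
    exact ⟨⟨t, ht⟩, h.trans he.ge⟩
  · rintro ⟨t, ht⟩
    exact ht.trans (le_csSup hfin.bddAbove (mem_image_of_mem g t.2))

theorem le_sInf_image_iff (hT : T.Nonempty) (hV : V.Finite) (hg : ∀ t ∈ T, g t ∈ V) {v : ℝ} :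
    v ≤ sInf (g '' T) ↔ ∀ t : T, v ≤ g t := by
  have hfin : (g '' T).Finite := hV.subset (image_subset_iff.2 hg)
  rw [le_csInf_iff hfin.bddBelow (hT.image g)]
  simp

end Quantifiers

/-- Every definable set is the set of contexts satisfying some HyperLTL formula. -/
theorem Def.exists_formula [DecidableEq Var] {F : Set Var} {A : Set (BoolCtx AP Var)}
    (h : Def F A) : ∃ χ : PropForm AP Var boolSig, freeVars χ = F ∧
      ∀ x, sem χ x.assign x.traces = A.indicator 1 x := by
  have hV : ({0, 1} : Set ℝ).Finite := by simp
  induction h with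
  | qf h =>
    obtain ⟨χ, hvars, hχ⟩ := h.exists_formula
    exact ⟨.qf χ, hvars, hχ⟩
  | @ex F A π _ ih =>
    obtain ⟨χ, rfl, hχ⟩ := ih
    refine ⟨.ex π χ, rfl, fun x => ?_⟩
    have hg : ∀ t ∈ x.traces, sem χ (Function.update x.assign π t) x.traces ∈ ({0, 1} : Set ℝ) :=
      fun t ht => (hχ (x.update π ⟨t, ht⟩)).symm ▸ indicator_one_mem A _
    refine eq_indicator_one (sSup_image_mem x.nonempty hV hg) ?_
    refine (le_sSup_image_iff x.nonempty hV hg).trans ?_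
    exact exists_congr fun t => (hχ (x.update π t)).symm ▸ one_le_indicator_one_iff A (x.update π t)
  | @all F A π _ ih =>
    obtain ⟨χ, rfl, hχ⟩ := ih
    refine ⟨.all π χ, rfl, fun x => ?_⟩
    have hg : ∀ t ∈ x.traces, sem χ (Function.update x.assign π t) x.traces ∈ ({0, 1} : Set ℝ) :=
      fun t ht => (hχ (x.update π ⟨t, ht⟩)).symm ▸ indicator_one_mem A _
    refine eq_indicator_one (sInf_image_mem x.nonempty hV hg) ?_
    refine (le_sInf_image_iff x.nonempty hV hg).trans ?_
    exact forall_congr' fun t => (hχ (x.update π t)).symm ▸ one_le_indicator_one_iff A (x.update π t)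

/-- Over Boolean contexts, a quantifier-free formula takes finitely many values, and each set of
values is definable. -/
theorem semQF_finite_and_definable (φ : PropQF AP Var S) : ∃ V : Set ℝ, V.Finite ∧
    V ⊆ Icc 0 1 ∧ (∀ x : BoolCtx AP Var, semQF φ x.assign x.traces ∈ V) ∧
    ∀ P : Set ℝ, QFDef (varsQF φ) {x : BoolCtx AP Var | semQF φ x.assign x.traces ∈ P} := by
  have hconst : ∀ p : Prop, QFDef (∅ : Set Var) {_x : BoolCtx AP Var | p} := by
    intro p
    by_cases hp : p
    · simpa [hp] using QFDef.univ
    · simpa [hp] using QFDef.univ.compl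
  induction φ with
  | tt => exact ⟨{1}, by simp, by simp, fun _ => rfl, fun P => hconst (_ ∈ P)⟩
  | ff => exact ⟨{0}, by simp, by simp, fun _ => rfl, fun P => hconst (_ ∈ P)⟩
  | atom p π =>
    have hmem : ∀ x : BoolCtx AP Var, (x.assign π 0 p : ℝ) ∈ ({0, 1} : Set ℝ) :=
      fun x => x.isBool_assign π 0 p
    have hat := QFDef.atom p π
    refine ⟨{0, 1}, by simp, by simp [insert_subset_iff], hmem, ?_⟩
    refine QFDef.preimage (by simp) hmem hat ?_
    rintro v (rfl | rfl)
    · refine (hat.inter_self_vars hat.compl).compl.congr fun x => ?_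
      rw [inter_compl_self, compl_empty]
      exact iff_of_true trivial (x.assign π 0 p).2.1
    · exact hat.congr fun x => (x.assign π 0 p).2.2.ge_iff_eq.symm
  | app f args ih =>
    choose V hfin hsub hmem hdef using ih
    refine ⟨S.interp f '' univ.pi V, (Finite.pi hfin).image _, ?_, fun x => ?_, fun P => ?_⟩
    · rintro _ ⟨v, hv, rfl⟩
      exact S.interp_mem f v fun i => hsub i (hv i trivial)
    · exact ⟨_, fun i _ => hmem i x, rfl⟩
    · have hcell : ∀ v : Fin (S.arity f) → ℝ, QFDef (⋃ i, varsQF (args i))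
          (⋂ i, {x : BoolCtx AP Var | semQF (args i) x.assign x.traces ∈ ({v i} : Set ℝ)}) :=
        fun v => QFDef.iInter fun i => hdef i {v i}
      have := biUnion_mem_of_finite (K := {B | QFDef (⋃ i, varsQF (args i)) B}) ⟨_, hcell 0⟩
        (fun _ h₁ _ h₂ => h₁.inter_self_vars h₂) (fun _ h => h.compl)
        ((Finite.pi hfin).inter_of_left (S.interp f ⁻¹' P)) fun v _ => hcell v
      refine QFDef.congr this fun x => ?_
      simp only [mem_ofPred_eq, mem_iUnion, mem_iInter, mem_singleton_iff, exists_prop]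
      constructor
      · rintro ⟨v, ⟨-, hv⟩, h⟩
        rwa [← funext h] at hv
      · exact fun h => ⟨_, ⟨fun i _ => hmem i x, h⟩, fun _ => rfl⟩
  | next φ ih =>
    obtain ⟨V, hfin, hsub, hmem, hdef⟩ := ih
    exact ⟨V, hfin, hsub, fun x => hmem (x.shift 1), fun P => (hdef P).next⟩
  | untl φ₁ φ₂ ih₁ ih₂ =>
    obtain ⟨V₁, hfin₁, hsub₁, hmem₁, hdef₁⟩ := ih₁
    obtain ⟨V₂, hfin₂, hsub₂, hmem₂, hdef₂⟩ := ih₂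
    have hV : (insert 1 (V₁ ∪ V₂)).Finite := (hfin₁.union hfin₂).insert 1
    have hsub : insert 1 (V₁ ∪ V₂) ⊆ Icc (0 : ℝ) 1 :=
      insert_subset (by simp) (union_subset hsub₁ hsub₂)
    have hmem₁' : ∀ (x : BoolCtx AP Var) i,
        semQF φ₁ (shiftA x.assign i) x.traces ∈ insert 1 (V₁ ∪ V₂) :=
      fun x i => .inr (.inl (hmem₁ (x.shift i)))
    have hmem₂' : ∀ (x : BoolCtx AP Var) i,
        semQF φ₂ (shiftA x.assign i) x.traces ∈ insert 1 (V₁ ∪ V₂) :=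
      fun x i => .inr (.inr (hmem₂ (x.shift i)))
    have hmem : ∀ x : BoolCtx AP Var,
        semQF (.untl φ₁ φ₂) x.assign x.traces ∈ insert 1 (V₁ ∪ V₂) := fun x =>
      iSup_min_prefMin_mem hV (mem_insert _ _) (hmem₁' x) (hmem₂' x)
    refine ⟨_, hV, hsub, hmem, QFDef.preimage hV hmem ((hdef₁ ∅).inter (hdef₂ ∅)) ?_⟩
    intro v hv
    exact ((hdef₁ (Ici v)).untl (hdef₂ (Ici v))).congr fun x =>
      (le_iSup_min_prefMin_iff hV (mem_insert _ _) (hmem₁' x) (hmem₂' x) (hsub hv).2).symm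

/-- Over Boolean contexts, a formula takes finitely many values, and each set of values is
definable. -/
theorem sem_finite_and_definable [DecidableEq Var] [Infinite Var] (ψ : PropForm AP Var S) :
    ∃ V : Set ℝ, V.Finite ∧ (∀ x : BoolCtx AP Var, sem ψ x.assign x.traces ∈ V) ∧
    ∀ P : Set ℝ, Def (freeVars ψ) {x : BoolCtx AP Var | sem ψ x.assign x.traces ∈ P} := by
  induction ψ with
  | qf φ =>
    obtain ⟨V, hfin, -, hmem, hdef⟩ := semQF_finite_and_definable φ
    exact ⟨V, hfin, hmem, fun P => .qf (hdef P)⟩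
  | ex π ψ ih =>
    obtain ⟨V, hfin, hmem, hdef⟩ := ih
    have hg : ∀ x : BoolCtx AP Var, ∀ t ∈ x.traces,
        sem ψ (Function.update x.assign π t) x.traces ∈ V :=
      fun x t ht => hmem (x.update π ⟨t, ht⟩)
    have hmem' : ∀ x : BoolCtx AP Var, sem (.ex π ψ) x.assign x.traces ∈ V :=
      fun x => sSup_image_mem x.nonempty hfin (hg x)
    refine ⟨V, hfin, hmem', Def.preimage hfin hmem' ((hdef ∅).ex π) fun v _ => ?_⟩
    exact ((hdef (Ici v)).ex π).congr fun x =>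
      (le_sSup_image_iff x.nonempty hfin (hg x)).symm
  | all π ψ ih =>
    obtain ⟨V, hfin, hmem, hdef⟩ := ih
    have hg : ∀ x : BoolCtx AP Var, ∀ t ∈ x.traces,
        sem ψ (Function.update x.assign π t) x.traces ∈ V :=
      fun x t ht => hmem (x.update π ⟨t, ht⟩)
    have hmem' : ∀ x : BoolCtx AP Var, sem (.all π ψ) x.assign x.traces ∈ V :=
      fun x => sInf_image_mem x.nonempty hfin (hg x)
    refine ⟨V, hfin, hmem', Def.preimage hfin hmem' ((hdef ∅).all π) fun v _ => ?_⟩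
    exact ((hdef (Ici v)).all π).congr fun x =>
      (le_sInf_image_iff x.nonempty hfin (hg x)).symm

/-- For every `P ⊆ [0,1]` and every HyperLTL_prop formula `ψ`, there is a
HyperLTL formula `Bool(ψ,P)` (over the Boolean signature `max`, `min`, `x ↦ 1 - x`) with the
same free variables such that, over Boolean traces, `⟦ψ⟧_Π^T ∈ P ↔ ⟦Bool(ψ,P)⟧_Π^T = 1`. -/
theorem stmt_4 {AP Var : Type} [DecidableEq Var] [Infinite Var] {S : PropSig}
    (P : Set ℝ) (hP : P ⊆ Set.Icc (0:ℝ) 1) (ψ : PropForm AP Var S) :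
    ∃ χ : PropForm AP Var boolSig,
      freeVars χ = freeVars ψ ∧
      ∀ (ρ : Var → Trace AP) (T : Set (Trace AP)),
        (∀ π, IsBoolTrace (ρ π)) → T ⊆ {t | IsBoolTrace t} → T.Nonempty →
        (sem ψ ρ T ∈ P ↔ sem χ ρ T = 1) := by
  obtain ⟨-, -, -, hdef⟩ := sem_finite_and_definable (AP := AP) ψ
  obtain ⟨χ, hfree, hχ⟩ := (hdef P).exists_formula
  refine ⟨χ, hfree, fun ρ T hρ hT hne => ?_⟩
  have h := hχ ⟨ρ, T, hρ, hT, hne⟩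
  by_cases hmem : sem ψ ρ T ∈ P
  · rw [indicator_of_mem (by exact hmem)] at h
    exact iff_of_true hmem h
  · rw [indicator_of_notMem (by exact hmem)] at h
    exact iff_of_false hmem fun h' => zero_ne_one (h.symm.trans h')

end
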